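/- arXiv:2107.09829 — 2 statements merged into one kernel-verified Lean document; each statement's English description precedes it below -/
import Mathlib

section
/- Let d ∈ (0,1/2) and h ∈ (0, 1/2 − d). Then the function (x,y) ↦ (1 − y)^{h−1} (−x)^{h−1} |x − y|^{2d−1} is integrable on (−∞,0) × (−∞,1), and the integral ∫_{−∞}^0 ∫_{−∞}^1 (1 − y)^{h−1} (−x)^{h−1} |x − y|^{2d−1} dy dx is a finite positive real number. -/
open MeasureTheory Real Set

/-! With `v = t - y` and `u = s - x` the integrand becomes
`v ^ a * u ^ b * |v - (u + (t - s))| ^ c`. Scaling `v` by `u + (t - s)` shows that its `v`-integral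
is a constant multiple of `(u + (t - s)) ^ (a + c + 1)`, so Tonelli reduces integrability in the
plane to two one-variable integrals, each converging by a comparison of exponents at `0` and `∞`. -/

open Asymptotics Filter Topology

lemma setIntegral_pos_of_pos_on_isOpen {X : Type*} [TopologicalSpace X] [MeasurableSpace X]
    {μ : Measure X} [μ.IsOpenPosMeasure] {f : X → ℝ} {s U : Set X} (hs : MeasurableSet s)
    (hf : IntegrableOn f s μ) (hf_nonneg : ∀ x ∈ s, 0 ≤ f x) (hU : IsOpen U)
    (hU_nonempty : U.Nonempty) (hUs : U ⊆ s) (hf_pos : ∀ x ∈ U, 0 < f x) :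
    0 < ∫ x in s, f x ∂μ := by
  rw [setIntegral_pos_iff_support_of_nonneg_ae (ae_restrict_of_forall_mem hs hf_nonneg) hf]
  exact (hU.measure_pos μ hU_nonempty).trans_le <|
    measure_mono fun x hx ↦ ⟨(hf_pos x hx).ne', hUs hx⟩

lemma locallyIntegrable_norm_sub_rpow {E : Type*} [NormedAddCommGroup E] [NormedSpace ℝ E]
    [FiniteDimensional ℝ E] [Nontrivial E] [MeasurableSpace E] [BorelSpace E] (μ : Measure E)
    [μ.IsAddHaarMeasure] {c : ℝ} (hc : -(Module.finrank ℝ E : ℝ) < c) (t : E) :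
    LocallyIntegrable (fun x ↦ ‖x - t‖ ^ c) μ := by
  have integrableOn_ball (r : ℝ) : IntegrableOn (fun x : E ↦ ‖x‖ ^ c) (Metric.ball 0 r) μ := by
    rcases le_or_gt r 0 with hr | hr
    · simp [Metric.ball_eq_empty.2 hr]
    rw [integrableOn_fun_norm_addHaar μ (f := fun y ↦ y ^ c)]
    have hpow : IntegrableOn (fun y : ℝ ↦ y ^ ((Module.finrank ℝ E - 1 : ℕ) + c)) (Ioo 0 r) := by
      rw [intervalIntegral.integrableOn_Ioo_rpow_iff hr,
        Nat.cast_sub (Nat.one_le_iff_ne_zero.2 Module.finrank_pos.ne')]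
      push_cast
      linarith
    refine hpow.congr_fun (fun y hy ↦ ?_) measurableSet_Ioo
    simp only [rpow_add hy.1, rpow_natCast, smul_eq_mul]
  intro x
  refine ⟨Metric.ball t (‖x - t‖ + 1), Metric.isOpen_ball.mem_nhds ?_, ?_⟩
  · rw [mem_ball_iff_norm]
    exact lt_add_one _
  · have hpre : Metric.ball t (‖x - t‖ + 1) = (· - t) ⁻¹' Metric.ball 0 (‖x - t‖ + 1) := by
      ext y; simp [dist_eq_norm]
    rw [hpre]
    exact ((measurePreserving_sub_right μ t).integrableOn_comp_preimage
      (measurableEmbedding_subRight t)).2 (integrableOn_ball _)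

lemma isBigO_abs_sub_rpow_atTop (t c : ℝ) :
    (fun x : ℝ ↦ |x - t| ^ c) =O[atTop] (fun x ↦ x ^ c) := by
  have hequiv : (fun x : ℝ ↦ x - t) ~[atTop] (fun x ↦ x) :=
    (isLittleO_const_id_atTop t).neg_left.congr_left (by simp)
  exact (hequiv.isTheta.norm_left.rpow (.of_forall fun x ↦ norm_nonneg _)
    (eventually_ge_atTop 0)).isBigO

lemma isBigO_abs_sub_rpow_nhds {t x₀ : ℝ} (hx₀ : x₀ ≠ t) (c : ℝ) :
    (fun x : ℝ ↦ |x - t| ^ c) =O[𝓝 x₀] (fun _ ↦ (1 : ℝ)) :=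
  ((by fun_prop : ContinuousAt (fun x : ℝ ↦ |x - t|) x₀).rpow_const
    (.inl (abs_ne_zero.2 (sub_ne_zero.2 hx₀)))).isBigO_one ℝ

section OneVariable

variable {a c t : ℝ}

lemma integrableOn_Ioi_rpow_mul_abs_sub_rpow_of_locallyIntegrableOn
    (hloc : LocallyIntegrableOn (fun v : ℝ ↦ |v - t| ^ c) (Ioi 0)) (ht : t ≠ 0) (ha : -1 < a)
    (hac : a + c < -1) : IntegrableOn (fun v : ℝ ↦ v ^ a * |v - t| ^ c) (Ioi 0) := by
  have hconv := mellin_convergent_of_isBigO_scalar (a := -c) (b := 0) (s := a + 1) hloc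
    (by simpa only [neg_neg] using isBigO_abs_sub_rpow_atTop t c) (by linarith)
    (by simpa only [neg_zero, rpow_zero] using
      (isBigO_abs_sub_rpow_nhds ht.symm c).mono nhdsWithin_le_nhds) (by linarith)
  simpa only [add_sub_cancel_right] using hconv

lemma integrableOn_Ioi_rpow_mul_abs_sub_rpow (ht : t ≠ 0) (ha : -1 < a) (hc : -1 < c)
    (hac : a + c < -1) : IntegrableOn (fun v : ℝ ↦ v ^ a * |v - t| ^ c) (Ioi 0) :=
  integrableOn_Ioi_rpow_mul_abs_sub_rpow_of_locallyIntegrableOn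
    ((locallyIntegrable_norm_sub_rpow volume (by simpa using hc) t).locallyIntegrableOn _) ht ha hac

lemma integrableOn_Ioi_rpow_mul_add_rpow (ht : 0 < t) (ha : -1 < a) (hac : a + c < -1) :
    IntegrableOn (fun u : ℝ ↦ u ^ a * (u + t) ^ c) (Ioi 0) := by
  have hcont : ContinuousOn (fun u : ℝ ↦ |u - -t| ^ c) (Ioi 0) :=
    ContinuousOn.rpow_const (by fun_prop) fun u (hu : 0 < u) ↦
      .inl (abs_ne_zero.2 (by linarith))
  refine (integrableOn_Ioi_rpow_mul_abs_sub_rpow_of_locallyIntegrableOn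
    (hcont.locallyIntegrableOn measurableSet_Ioi) (neg_ne_zero.2 ht.ne') ha hac).congr_fun
    (fun u (hu : 0 < u) ↦ ?_) measurableSet_Ioi
  simp only [sub_neg_eq_add, abs_of_pos (add_pos hu ht)]

lemma integral_Ioi_rpow_mul_abs_sub_rpow (ht : 0 < t) :
    ∫ v in Ioi (0 : ℝ), v ^ a * |v - t| ^ c
      = t ^ (a + c + 1) * ∫ v in Ioi (0 : ℝ), v ^ a * |v - 1| ^ c := by
  have hscale (v : ℝ) (hv : v ∈ Ioi 0) :
      (t * v) ^ a * |t * v - t| ^ c = t ^ (a + c) * (v ^ a * |v - 1| ^ c) := by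
    rw [← mul_sub_one, abs_mul, abs_of_pos ht, mul_rpow ht.le (mem_Ioi.1 hv).le,
      mul_rpow ht.le (abs_nonneg _), rpow_add ht]
    ring
  calc ∫ v in Ioi (0 : ℝ), v ^ a * |v - t| ^ c
      = t * ∫ v in Ioi (0 : ℝ), (t * v) ^ a * |t * v - t| ^ c := by
        rw [integral_comp_mul_left_Ioi (fun v ↦ v ^ a * |v - t| ^ c) 0 ht, mul_zero, smul_eq_mul,
          mul_inv_cancel_left₀ ht.ne']
    _ = t * (t ^ (a + c) * ∫ v in Ioi (0 : ℝ), v ^ a * |v - 1| ^ c) := by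
        rw [setIntegral_congr_fun measurableSet_Ioi hscale, integral_const_mul]
    _ = t ^ (a + c + 1) * ∫ v in Ioi (0 : ℝ), v ^ a * |v - 1| ^ c := by
        rw [rpow_add_one ht.ne']
        ring

end OneVariable

section TwoVariables

variable {a b c : ℝ}

lemma integrableOn_Ioi_prod_Ioi_rpow_mul_rpow_mul_abs_sub_rpow {δ : ℝ} (hδ : 0 < δ) (ha : -1 < a)
    (hb : -1 < b) (hc : -1 < c) (habc : a + b + c < -2) :
    IntegrableOn (fun p : ℝ × ℝ ↦ p.2 ^ a * p.1 ^ b * |p.2 - (p.1 + δ)| ^ c)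
      (Ioi 0 ×ˢ Ioi 0) := by
  have hmeas : Measurable fun p : ℝ × ℝ ↦ p.2 ^ a * p.1 ^ b * |p.2 - (p.1 + δ)| ^ c := by fun_prop
  rw [IntegrableOn, Measure.volume_eq_prod, ← Measure.prod_restrict,
    integrable_prod_iff hmeas.aestronglyMeasurable]
  have hfactor (u v : ℝ) :
      v ^ a * u ^ b * |v - (u + δ)| ^ c = u ^ b * (v ^ a * |v - (u + δ)| ^ c) := by ring
  simp only [hfactor]
  constructor
  · refine ae_restrict_of_forall_mem measurableSet_Ioi fun u (hu : 0 < u) ↦ ?_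
    exact (integrableOn_Ioi_rpow_mul_abs_sub_rpow (by positivity) ha hc (by linarith)).const_mul _
  · have hslice (u : ℝ) (hu : 0 < u) :
        ∫ v in Ioi (0 : ℝ), ‖u ^ b * (v ^ a * |v - (u + δ)| ^ c)‖
          = u ^ b * (u + δ) ^ (a + c + 1) * ∫ v in Ioi (0 : ℝ), v ^ a * |v - 1| ^ c := by
      rw [mul_assoc, ← integral_Ioi_rpow_mul_abs_sub_rpow (add_pos hu hδ), ← integral_const_mul]
      exact setIntegral_congr_fun measurableSet_Ioi fun v (hv : 0 < v) ↦
        norm_of_nonneg (by positivity)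
    have hint : IntegrableOn (fun u ↦ u ^ b * (u + δ) ^ (a + c + 1) *
        ∫ v in Ioi (0 : ℝ), v ^ a * |v - 1| ^ c) (Ioi 0) :=
      (integrableOn_Ioi_rpow_mul_add_rpow hδ hb (by linarith)).mul_const _
    exact hint.congr_fun (fun u hu ↦ (hslice u hu).symm) measurableSet_Ioi

lemma integrableOn_Iio_prod_Iio_rpow_mul_rpow_mul_abs_sub_rpow {s t : ℝ} (hst : s < t)
    (ha : -1 < a) (hb : -1 < b) (hc : -1 < c) (habc : a + b + c < -2) :
    IntegrableOn (fun p : ℝ × ℝ ↦ (t - p.2) ^ a * (s - p.1) ^ b * |p.1 - p.2| ^ c)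
      (Iio s ×ˢ Iio t) := by
  have hpres : MeasurePreserving (Prod.map (s - ·) (t - ·)) (volume : Measure (ℝ × ℝ)) volume :=
    (Measure.measurePreserving_sub_left volume s).prod (Measure.measurePreserving_sub_left volume t)
  have hemb : MeasurableEmbedding (Prod.map (s - ·) (t - ·) : ℝ × ℝ → ℝ × ℝ) :=
    (measurableEmbedding_subLeft s).prodMap (measurableEmbedding_subLeft t)
  have hcomp := (hpres.integrableOn_comp_preimage hemb).2
    (integrableOn_Ioi_prod_Ioi_rpow_mul_rpow_mul_abs_sub_rpow (sub_pos.2 hst) ha hb hc habc)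
  have hpre : Prod.map (s - ·) (t - ·) ⁻¹' (Ioi 0 ×ˢ Ioi 0) = Iio s ×ˢ Iio t := by
    ext p; simp
  rw [hpre] at hcomp
  refine hcomp.congr_fun (fun p _ ↦ ?_) (measurableSet_Iio.prod measurableSet_Iio)
  simp only [Function.comp_apply, Prod.map_fst, Prod.map_snd]
  ring_nf

theorem long_memory_constant_finite_positive_general {s t : ℝ} (hst : s < t) (ha : -1 < a)
    (hb : -1 < b) (hc : -1 < c) (habc : a + b + c < -2) :
    IntegrableOn (fun p : ℝ × ℝ ↦ (t - p.2) ^ a * (s - p.1) ^ b * |p.1 - p.2| ^ c)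
      (Iio s ×ˢ Iio t) ∧
    0 < ∫ x in Iio s, ∫ y in Iio t, (t - y) ^ a * (s - x) ^ b * |x - y| ^ c := by
  have hint := integrableOn_Iio_prod_Iio_rpow_mul_rpow_mul_abs_sub_rpow hst ha hb hc habc
  refine ⟨hint, ?_⟩
  rw [← setIntegral_prod _ hint]
  -- On `Iio s ×ˢ Ioo s t` one has `x < y`, which avoids the zero of the integrand at `x = y`.
  refine setIntegral_pos_of_pos_on_isOpen (measurableSet_Iio.prod measurableSet_Iio) hint ?_
    (isOpen_Iio.prod (isOpen_Ioo (a := s) (b := t))) (nonempty_Iio.prod (nonempty_Ioo.2 hst))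
    (prod_mono_right Ioo_subset_Iio_self) ?_
  · rintro ⟨x, y⟩ ⟨hx : x < s, hy : y < t⟩
    positivity
  · rintro ⟨x, y⟩ ⟨hx : x < s, hsy : s < y, hyt : y < t⟩
    have hxy : x - y ≠ 0 := sub_ne_zero.2 (hx.trans hsy).ne
    positivity

end TwoVariables

/-- the limiting constant in the long-memory asymptotics is a finite positive
real number: for `d ∈ (0,1/2)` and `h ∈ (0, 1/2−d)`, the function
`(x,y) ↦ (1−y)^{h−1}(−x)^{h−1}|x−y|^{2d−1}` is integrable on `(−∞,0) × (−∞,1)` and its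
integral is positive. -/
theorem long_memory_constant_finite_positive (d h : ℝ) (hd0 : 0 < d) (hd2 : d < 1 / 2)
    (hh0 : 0 < h) (hh : h < 1 / 2 - d) :
    IntegrableOn (fun p : ℝ × ℝ =>
        (1 - p.2) ^ (h - 1) * (-p.1) ^ (h - 1) * |p.1 - p.2| ^ (2 * d - 1))
      (Iio (0 : ℝ) ×ˢ Iio (1 : ℝ)) ∧
    0 < ∫ x in Iio (0 : ℝ), ∫ y in Iio (1 : ℝ),
        (1 - y) ^ (h - 1) * (-x) ^ (h - 1) * |x - y| ^ (2 * d - 1) := by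
  simpa only [zero_sub] using long_memory_constant_finite_positive_general (zero_lt_one' ℝ)
    (a := h - 1) (b := h - 1) (c := 2 * d - 1) (by linarith) (by linarith) (by linarith)
    (by linarith)
end

section
/- Let d ∈ (0,1/2), h ∈ (0, 1/2 − d), and t > 0. For α > 0 define G_α : ℝ → ℝ by G_α(v) = (1/h)[(α + t − v)^h − (α + max(v,0) − v)^h] for v ≤ t and G_α(v) = 0 for v > t, and define m : ℝ → ℝ by m(v) = (1/h)[(t − v)_+^h − (−v)_+^h]. Then lim_{α→0^+} ∫_ℝ ∫_ℝ (G_α(u) − m(u))(G_α(v) − m(v)) |u − v|^{2d−1} du dv = 0. -/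
open MeasureTheory Real Set Filter Topology

/-- The kernel `G_α` of the time-integrated Gamma mixed fractional Lévy
Ornstein–Uhlenbeck process (STATEMENT 18):
`G_α(v) = (1/h)[(α+t−v)^h − (α + max(v,0) − v)^h]` for `v ≤ t` and `0` for `v > t`. -/
noncomputable def integratedKernel (h t α v : ℝ) : ℝ :=
  if v ≤ t then (1 / h) * ((α + t - v) ^ h - (α + max v 0 - v) ^ h) else 0

/-- The kernel `m(v) = (1/h)[(t−v)_+^h − (−v)_+^h]` of the limit process `Y^d`
(STATEMENT 18). -/
noncomputable def limitKernel (h t v : ℝ) : ℝ :=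
  (1 / h) * (max (t - v) 0 ^ h - max (-v) 0 ^ h)

/-!
Write `D_α = G_α - m`. For `v ≤ t`, `h * D_α v` is an increment of step `α` of `x ↦ x ^ h` at
`t - v` minus one at `max (-v) 0`. Each increment is at most `α ^ h` by subadditivity, and for
`v < 0` their difference is a mixed second difference, of order `α * t * (-v) ^ (h - 2)` by the mean
value theorem. Hence `|D_α v| ≤ C * α ^ h * (1 + |v|) ^ (h - 2)`, with a profile that is bounded and
integrable. Since `|w| ^ (2 * d - 1)` is integrable near the origin and bounded away from it, such a
profile has finite energy, and the energy of `D_α` is `O(α ^ (2 * h))`.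
-/

lemma norm_secondDifference_le {E : Type*} [NormedAddCommGroup E] [NormedSpace ℝ E]
    {f f' f'' : ℝ → E} {x a b C : ℝ} (hf : ∀ y ∈ Ici x, HasDerivAt f (f' y) y)
    (hf' : ∀ y ∈ Ici x, HasDerivAt f' (f'' y) y) (hC : ∀ y ∈ Ici x, ‖f'' y‖ ≤ C)
    (ha : 0 ≤ a) (hb : 0 ≤ b) :
    ‖(f (x + b + a) - f (x + b)) - (f (x + a) - f x)‖ ≤ C * a * b := by
  have shift_mem {y c : ℝ} (hy : y ∈ Ici x) (hc : 0 ≤ c) : y + c ∈ Ici x :=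
    le_add_of_le_of_nonneg hy hc
  have increment_deriv_le : ∀ y ∈ Ici x, ‖f' (y + a) - f' y‖ ≤ C * a := fun y hy => by
    simpa only [add_sub_cancel_left, Real.norm_of_nonneg ha] using
      (convex_Ici x).norm_image_sub_le_of_norm_hasDerivWithin_le
        (fun z hz => (hf' z hz).hasDerivWithinAt) hC hy (shift_mem hy ha)
  have increment_hasDerivAt : ∀ y ∈ Ici x,
      HasDerivAt (fun z => f (z + a) - f z) (f' (y + a) - f' y) y := fun y hy =>
    ((hf _ (shift_mem hy ha)).comp_add_const y a).sub (hf y hy)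
  simpa only [add_sub_cancel_left, Real.norm_of_nonneg hb] using
    (convex_Ici x).norm_image_sub_le_of_norm_hasDerivWithin_le
      (fun y hy => (increment_hasDerivAt y hy).hasDerivWithinAt) increment_deriv_le
      self_mem_Ici (shift_mem self_mem_Ici hb)

lemma abs_rpow_secondDifference_le {p x a b : ℝ} (hp : p ≤ 2) (hx : 0 < x) (ha : 0 ≤ a)
    (hb : 0 ≤ b) :
    |((x + b + a) ^ p - (x + b) ^ p) - ((x + a) ^ p - x ^ p)|
      ≤ |p * (p - 1)| * x ^ (p - 2) * a * b := by
  refine norm_secondDifference_le (f := fun y => y ^ p) (f' := fun y => p * y ^ (p - 1))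
    (f'' := fun y => p * (p - 1) * y ^ (p - 2)) (fun y hy => ?_) (fun y hy => ?_)
    (fun y hy => ?_) ha hb
  · exact Real.hasDerivAt_rpow_const (Or.inl (hx.trans_le hy).ne')
  · simpa only [mul_assoc, sub_sub, one_add_one_eq_two] using
      (Real.hasDerivAt_rpow_const (p := p - 1) (Or.inl (hx.trans_le hy).ne')).const_mul p
  · rw [norm_mul, Real.norm_eq_abs, Real.norm_of_nonneg (rpow_nonneg (hx.le.trans hy) _)]
    exact mul_le_mul_of_nonneg_left (rpow_le_rpow_of_nonpos hx hy (by linarith)) (abs_nonneg _)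

lemma rpow_add_sub_rpow_mem_Icc {p x a : ℝ} (hp : 0 ≤ p) (hp1 : p ≤ 1) (hx : 0 ≤ x)
    (ha : 0 ≤ a) : (x + a) ^ p - x ^ p ∈ Icc 0 (a ^ p) :=
  ⟨sub_nonneg.2 (rpow_le_rpow hx (le_add_of_nonneg_right ha) hp),
    sub_le_iff_le_add'.2 (rpow_add_le_add_rpow hx ha hp hp1)⟩

lemma rpow_le_rpow_neg_mul_rpow_of_le_mul {x y K p : ℝ} (hx : 0 < x) (hy : 0 ≤ y) (hK : 0 < K)
    (hxy : x ≤ K * y) (hp : p ≤ 0) : y ^ p ≤ K ^ (-p) * x ^ p :=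
  calc y ^ p = K ^ (-p) * (K * y) ^ p := by
        rw [mul_rpow hK.le hy, ← mul_assoc, ← rpow_add hK, neg_add_cancel, rpow_zero, one_mul]
    _ ≤ K ^ (-p) * x ^ p :=
        mul_le_mul_of_nonneg_left (rpow_le_rpow_of_nonpos hx hxy hp) (rpow_nonneg hK.le _)

section Energy

variable {G : Type*} [AddGroup G] [MeasurableSpace G]

/-- The quadratic energy of `f` under the pair interaction `k (u - v)`. For `k w = |w| ^ (2 d - 1)`
this is, up to a constant, the second moment of the integral of `f` against a fractional Lévy
process with parameter `d`. As with every Bochner integral, it is `0` when the integrand is not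
integrable. -/
noncomputable def kernelEnergy (μ : Measure G) (k f : G → ℝ) : ℝ :=
  ∫ v, ∫ u, f u * f v * k (u - v) ∂μ ∂μ

variable [MeasurableAdd G] {μ : Measure G} [μ.IsAddRightInvariant]

lemma norm_integral_mul_comp_sub_le {k κ f φ : G → ℝ} {C M : ℝ} (hκ : Integrable κ μ)
    (hφ : Integrable φ μ) (hC : 0 ≤ C) (hk : ∀ w, ‖k w‖ ≤ ‖κ w‖ + C) (hfM : ∀ u, ‖f u‖ ≤ M)
    (hfφ : ∀ u, ‖f u‖ ≤ φ u) (v : G) :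
    ‖∫ u, f u * k (u - v) ∂μ‖ ≤ M * (∫ w, ‖κ w‖ ∂μ) + C * ∫ u, φ u ∂μ := by
  have hκv : Integrable (fun u => ‖κ (u - v)‖) μ := (hκ.comp_sub_right v).norm
  have pointwise_le (u : G) : ‖f u * k (u - v)‖ ≤ M * ‖κ (u - v)‖ + C * φ u :=
    calc ‖f u * k (u - v)‖ ≤ ‖f u‖ * (‖κ (u - v)‖ + C) := by
          rw [norm_mul]
          gcongr
          exact hk _
      _ = ‖f u‖ * ‖κ (u - v)‖ + C * ‖f u‖ := by ring
      _ ≤ M * ‖κ (u - v)‖ + C * φ u := by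
          gcongr
          exacts [hfM u, hfφ u]
  calc ‖∫ u, f u * k (u - v) ∂μ‖ ≤ ∫ u, (M * ‖κ (u - v)‖ + C * φ u) ∂μ :=
        norm_integral_le_of_norm_le ((hκv.const_mul M).add (hφ.const_mul C))
          (ae_of_all μ pointwise_le)
    _ = M * (∫ w, ‖κ w‖ ∂μ) + C * ∫ u, φ u ∂μ := by
        rw [integral_add (hκv.const_mul M) (hφ.const_mul C), integral_const_mul,
          integral_const_mul, integral_sub_right_eq_self (fun w => ‖κ w‖) v]

lemma norm_kernelEnergy_le {k κ f φ : G → ℝ} {C M : ℝ} (hκ : Integrable κ μ)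
    (hφ : Integrable φ μ) (hC : 0 ≤ C) (hk : ∀ w, ‖k w‖ ≤ ‖κ w‖ + C) (hfM : ∀ u, ‖f u‖ ≤ M)
    (hfφ : ∀ u, ‖f u‖ ≤ φ u) :
    ‖kernelEnergy μ k f‖ ≤
      (∫ v, φ v ∂μ) * (M * (∫ w, ‖κ w‖ ∂μ) + C * ∫ u, φ u ∂μ) := by
  rw [← integral_mul_const]
  refine norm_integral_le_of_norm_le (hφ.mul_const _) (ae_of_all μ fun v => ?_)
  calc ‖∫ u, f u * f v * k (u - v) ∂μ‖ = ‖f v‖ * ‖∫ u, f u * k (u - v) ∂μ‖ := by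
        rw [← norm_mul, ← integral_const_mul]
        simp only [mul_assoc, mul_left_comm]
    _ ≤ φ v * (M * (∫ w, ‖κ w‖ ∂μ) + C * ∫ u, φ u ∂μ) := by
        gcongr
        exacts [(norm_nonneg _).trans (hfφ v), hfφ v,
          norm_integral_mul_comp_sub_le hκ hφ hC hk hfM hfφ v]

theorem tendsto_kernelEnergy_zero {ι : Type*} {l : Filter ι} {k κ Φ : G → ℝ} {f : ι → G → ℝ}
    {ε : ι → ℝ} {C M : ℝ} (hκ : Integrable κ μ) (hΦ : Integrable Φ μ) (hC : 0 ≤ C)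
    (hk : ∀ w, ‖k w‖ ≤ ‖κ w‖ + C) (hΦM : ∀ v, ‖Φ v‖ ≤ M)
    (hf : ∀ᶠ i in l, ∀ v, ‖f i v‖ ≤ ε i * Φ v) (hε : Tendsto ε l (𝓝 0)) :
    Tendsto (fun i => kernelEnergy μ k (f i)) l (𝓝 0) := by
  have energy_le : ∀ᶠ i in l, ‖kernelEnergy μ k (f i)‖ ≤
      (ε i * ∫ v, Φ v ∂μ) * (|ε i| * M * (∫ w, ‖κ w‖ ∂μ) + C * (ε i * ∫ u, Φ u ∂μ)) := by
    filter_upwards [hf] with i hfi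
    have f_bounded (u : G) : ‖f i u‖ ≤ |ε i| * M :=
      calc ‖f i u‖ ≤ |ε i * Φ u| := (hfi u).trans (le_abs_self _)
        _ = |ε i| * ‖Φ u‖ := abs_mul _ _
        _ ≤ |ε i| * M := by
            gcongr
            exact hΦM u
    simpa only [integral_const_mul] using
      norm_kernelEnergy_le hκ (hΦ.const_mul (ε i)) hC hk f_bounded hfi
  refine squeeze_zero_norm' energy_le ?_
  simpa using (hε.mul_const (∫ v, Φ v ∂μ)).mul
    (((hε.abs.mul_const M).mul_const (∫ w, ‖κ w‖ ∂μ)).add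
      ((hε.mul_const (∫ u, Φ u ∂μ)).const_mul C))

end Energy

section RieszKernel

lemma norm_rpow_le_indicator_ball_add_one {E : Type*} [SeminormedAddCommGroup E] {r : ℝ}
    (hr : r ≤ 0) (w : E) :
    ‖‖w‖ ^ r‖ ≤ ‖(Metric.ball 0 1).indicator (fun w : E => ‖w‖ ^ r) w‖ + 1 := by
  by_cases hw : w ∈ Metric.ball 0 1
  · rw [indicator_of_mem hw]
    exact le_add_of_nonneg_right zero_le_one
  · rw [indicator_of_notMem hw, norm_zero, zero_add,
      Real.norm_of_nonneg (rpow_nonneg (norm_nonneg w) r)]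
    exact rpow_le_one_of_one_le_of_nonpos (by simpa using hw) hr

variable {E : Type*} [NormedAddCommGroup E] [NormedSpace ℝ E] [FiniteDimensional ℝ E]
  [Nontrivial E] [MeasurableSpace E] [BorelSpace E] {μ : Measure E} [μ.IsAddHaarMeasure] {r : ℝ}

lemma integrable_indicator_ball_norm_rpow (hr : -(Module.finrank ℝ E : ℝ) < r) (R : ℝ) :
    Integrable ((Metric.ball 0 R).indicator fun w : E => ‖w‖ ^ r) μ := by
  rw [integrable_indicator_iff Metric.isOpen_ball.measurableSet]
  refine integrableOn_ball_of_norm_le_rpow Module.finrank_pos (neg_lt.1 hr)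
    (ae_of_all _ fun w => ?_) (by fun_prop : Measurable fun w : E => ‖w‖ ^ r).aestronglyMeasurable
    (C := 1)
  rw [neg_neg, one_mul, Real.norm_of_nonneg (rpow_nonneg (norm_nonneg w) r)]

theorem tendsto_kernelEnergy_norm_rpow_zero {ι : Type*} {l : Filter ι}
    (hr : -(Module.finrank ℝ E : ℝ) < r) (hr0 : r ≤ 0) {Φ : E → ℝ} {f : ι → E → ℝ}
    {ε : ι → ℝ} {M : ℝ} (hΦ : Integrable Φ μ) (hΦM : ∀ v, ‖Φ v‖ ≤ M)
    (hf : ∀ᶠ i in l, ∀ v, ‖f i v‖ ≤ ε i * Φ v) (hε : Tendsto ε l (𝓝 0)) :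
    Tendsto (fun i => kernelEnergy μ (fun w => ‖w‖ ^ r) (f i)) l (𝓝 0) :=
  tendsto_kernelEnergy_zero (integrable_indicator_ball_norm_rpow hr 1) hΦ zero_le_one
    (norm_rpow_le_indicator_ball_add_one hr0) hΦM hf hε

end RieszKernel

section KernelDifference

variable {h t α v : ℝ}

lemma integratedKernel_sub_limitKernel_of_le (hv : v ≤ t) :
    integratedKernel h t α v - limitKernel h t v =
      1 / h * (((-v + t + α) ^ h - (-v + t) ^ h) - ((max (-v) 0 + α) ^ h - max (-v) 0 ^ h)) := by
  have max_sub_eq : max v 0 - v = max (-v) 0 := by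
    rw [← max_sub_sub_right, sub_self, zero_sub, max_comm]
  rw [integratedKernel, limitKernel, if_pos hv, max_eq_left (sub_nonneg.2 hv), add_sub_assoc α,
    add_sub_assoc α, max_sub_eq]
  ring_nf

lemma integratedKernel_sub_limitKernel_of_lt (ht : 0 ≤ t) (hv : t < v) :
    integratedKernel h t α v - limitKernel h t v = 0 := by
  rw [integratedKernel, limitKernel, if_neg hv.not_ge, max_eq_right (by linarith),
    max_eq_right (by linarith), sub_self, mul_zero, sub_zero]

lemma abs_integratedKernel_sub_limitKernel_le_rpow (hh0 : 0 < h) (hh1 : h ≤ 1) (hα : 0 ≤ α)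
    (hv : v ≤ t) : |integratedKernel h t α v - limitKernel h t v| ≤ 1 / h * α ^ h := by
  rw [integratedKernel_sub_limitKernel_of_le hv, abs_mul, abs_of_nonneg (one_div_nonneg.2 hh0.le)]
  gcongr
  obtain ⟨lower, upper⟩ := rpow_add_sub_rpow_mem_Icc hh0.le hh1 (by linarith : 0 ≤ -v + t) hα
  obtain ⟨lower₀, upper₀⟩ := rpow_add_sub_rpow_mem_Icc hh0.le hh1 (le_max_right (-v) 0) hα
  exact abs_sub_le_of_nonneg_of_le lower upper lower₀ upper₀

lemma abs_integratedKernel_sub_limitKernel_le_of_neg (hh0 : h ≠ 0) (hh2 : h ≤ 2) (ht : 0 ≤ t)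
    (hα : 0 ≤ α) (hv : v < 0) :
    |integratedKernel h t α v - limitKernel h t v| ≤ |h - 1| * (-v) ^ (h - 2) * α * t := by
  rw [integratedKernel_sub_limitKernel_of_le (hv.le.trans ht), max_eq_left (neg_pos.2 hv).le,
    abs_mul]
  calc |1 / h| * |((-v + t + α) ^ h - (-v + t) ^ h) - ((-v + α) ^ h - (-v) ^ h)|
      ≤ |1 / h| * (|h * (h - 1)| * (-v) ^ (h - 2) * α * t) := by
        gcongr
        exact abs_rpow_secondDifference_le hh2 (neg_pos.2 hv) hα ht
    _ = |1 / h * (h * (h - 1))| * (-v) ^ (h - 2) * α * t := by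
        rw [abs_mul (1 / h)]
        ring
    _ = |h - 1| * (-v) ^ (h - 2) * α * t := by rw [one_div, inv_mul_cancel_left₀ hh0]

lemma abs_integratedKernel_sub_limitKernel_le_max_rpow (hh0 : 0 < h) (hh1 : h ≤ 1) (ht : 0 ≤ t)
    (hα : 0 < α) (hα1 : α ≤ 1) (hv : v ≤ t) :
    |integratedKernel h t α v - limitKernel h t v|
      ≤ (1 / h + t) * α ^ h * max 1 (-v) ^ (h - 2) := by
  rcases le_or_gt (-v) 1 with hv1 | hv1
  · rw [max_eq_left hv1, one_rpow, mul_one]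
    exact (abs_integratedKernel_sub_limitKernel_le_rpow hh0 hh1 hα.le hv).trans
      (mul_le_mul_of_nonneg_right (le_add_of_nonneg_right ht) (rpow_nonneg hα.le h))
  · have neg_v_pos : 0 < -v := zero_lt_one.trans hv1
    rw [max_eq_right hv1.le]
    have abs_sub_one_le : |h - 1| ≤ 1 := abs_le.2 ⟨by linarith, by linarith⟩
    have le_rpow_self : α ≤ α ^ h := by
      simpa only [rpow_one] using rpow_le_rpow_of_exponent_ge hα hα1 hh1
    have le_one_div_add : t ≤ 1 / h + t := le_add_of_nonneg_left (by positivity)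
    calc |integratedKernel h t α v - limitKernel h t v|
        ≤ |h - 1| * (-v) ^ (h - 2) * α * t :=
          abs_integratedKernel_sub_limitKernel_le_of_neg hh0.ne' (by linarith) ht hα.le
            (neg_pos.1 neg_v_pos)
      _ ≤ 1 * (-v) ^ (h - 2) * α ^ h * (1 / h + t) := by gcongr
      _ = (1 / h + t) * α ^ h * (-v) ^ (h - 2) := by ring

lemma abs_integratedKernel_sub_limitKernel_le (hh0 : 0 < h) (hh1 : h ≤ 1) (ht : 0 ≤ t)
    (hα : 0 < α) (hα1 : α ≤ 1) (v : ℝ) :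
    |integratedKernel h t α v - limitKernel h t v|
      ≤ (1 / h + t) * (2 + t) ^ (2 - h) * α ^ h * (1 + |v|) ^ (h - 2) := by
  rcases lt_or_ge t v with hv | hv
  · rw [integratedKernel_sub_limitKernel_of_lt ht hv, abs_zero]
    positivity
  have one_add_abs_le : 1 + |v| ≤ (2 + t) * max 1 (-v) := by
    have one_le : 1 ≤ max 1 (-v) := le_max_left 1 (-v)
    have abs_v_le : |v| ≤ t + max 1 (-v) :=
      abs_le'.2 ⟨by linarith, (le_max_right 1 (-v)).trans (le_add_of_nonneg_left ht)⟩
    linarith [le_mul_of_one_le_right ht one_le]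
  have profile_le : max 1 (-v) ^ (h - 2) ≤ (2 + t) ^ (2 - h) * (1 + |v|) ^ (h - 2) := by
    simpa only [neg_sub] using rpow_le_rpow_neg_mul_rpow_of_le_mul
      (by positivity) (by positivity) (by positivity) one_add_abs_le (by linarith : h - 2 ≤ 0)
  calc |integratedKernel h t α v - limitKernel h t v|
      ≤ (1 / h + t) * α ^ h * max 1 (-v) ^ (h - 2) :=
        abs_integratedKernel_sub_limitKernel_le_max_rpow hh0 hh1 ht hα hα1 hv
    _ ≤ (1 / h + t) * α ^ h * ((2 + t) ^ (2 - h) * (1 + |v|) ^ (h - 2)) := by gcongr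
    _ = (1 / h + t) * (2 + t) ^ (2 - h) * α ^ h * (1 + |v|) ^ (h - 2) := by ring

end KernelDifference

theorem integrated_process_converges_general (d h t : ℝ) (hd0 : 0 < d) (hd : d ≤ 1 / 2)
    (hh0 : 0 < h) (hh1 : h < 1) (ht : 0 ≤ t) :
    Tendsto (fun α : ℝ =>
        ∫ v : ℝ, ∫ u : ℝ,
          (integratedKernel h t α u - limitKernel h t u) *
            (integratedKernel h t α v - limitKernel h t v) * |u - v| ^ (2 * d - 1))
      (𝓝[>] (0 : ℝ)) (𝓝 0) := by
  have profile_integrable : Integrable fun v : ℝ => (1 + |v|) ^ (h - 2) := by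
    simpa using integrable_one_add_norm (μ := (volume : Measure ℝ)) (r := 2 - h)
      (by rw [Module.finrank_self, Nat.cast_one]; linarith)
  have profile_le_one (v : ℝ) : ‖(1 + |v|) ^ (h - 2)‖ ≤ 1 := by
    rw [Real.norm_of_nonneg (by positivity)]
    exact rpow_le_one_of_one_le_of_nonpos (le_add_of_nonneg_right (abs_nonneg v)) (by linarith)
  have amplitude_tendsto :
      Tendsto (fun α : ℝ => (1 / h + t) * (2 + t) ^ (2 - h) * α ^ h) (𝓝[>] 0) (𝓝 0) := by
    simpa [zero_rpow hh0.ne'] using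
      ((continuousAt_rpow_const 0 h (Or.inr hh0.le)).tendsto.const_mul
        ((1 / h + t) * (2 + t) ^ (2 - h))).mono_left nhdsWithin_le_nhds
  refine tendsto_kernelEnergy_norm_rpow_zero (by rw [Module.finrank_self, Nat.cast_one]; linarith)
    (by linarith) profile_integrable profile_le_one ?_ amplitude_tendsto
  filter_upwards [Ioc_mem_nhdsGT zero_lt_one] with α hα
  exact abs_integratedKernel_sub_limitKernel_le hh0 hh1.le ht hα.1 hα.2

/-- for `d ∈ (0,1/2)`, `h ∈ (0, 1/2−d)` and `t > 0`,
`∫∫ (G_α(u) − m(u))(G_α(v) − m(v))|u−v|^{2d−1} du dv → 0` as `α → 0⁺`; i.e. the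
time-integrated process `α^{h−1}∫_0^t Z^d(s) ds` converges in `L²` to `Y^d(t)`. -/
theorem integrated_process_converges (d h t : ℝ) (hd0 : 0 < d) (hd2 : d < 1 / 2)
    (hh0 : 0 < h) (hh : h < 1 / 2 - d) (ht : 0 < t) :
    Tendsto (fun α : ℝ =>
        ∫ v : ℝ, ∫ u : ℝ,
          (integratedKernel h t α u - limitKernel h t u) *
            (integratedKernel h t α v - limitKernel h t v) * |u - v| ^ (2 * d - 1))
      (𝓝[>] (0 : ℝ)) (𝓝 0) :=
  integrated_process_converges_general d h t hd0 hd2.le hh0 (by linarith) ht.le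
end
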